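/- arXiv:1209.0940 — 6 statements merged into one kernel-verified Lean document; each statement's English description precedes it below -/
import Mathlib

section
/- Let C be a category, and let f : X ⟶ Y be a morphism of C. Then the functor Over.map f : Over X ⥤ Over Y (post-composition with f) preserves limits of every shape given by a (small) connected category. -/
open CategoryTheory CategoryTheory.Limits

section

variable {A B D : Type*} [Category* A] [Category* B] [Category* D] {K : A ⥤ B} {X Y : B}
variable (J : Type*) [Category* J] [IsConnected J]

/- A cone over the projected diagram acquires a structure map to `Y` through any one leg, and
connectedness makes the choice of leg irrelevant; so the projection creates, hence reflects,
connected limits. -/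
theorem preservesLimitsOfShape_of_comp_costructuredArrow_proj (F : D ⥤ CostructuredArrow K Y)
    [PreservesLimitsOfShape J (F ⋙ CostructuredArrow.proj K Y)] : PreservesLimitsOfShape J F :=
  preservesLimitsOfShape_of_reflects_of_preserves F (CostructuredArrow.proj K Y)

/-- Post-composition with `f` does not change the underlying object: the analogue of
`Over.mapForget` for costructured arrows. -/
def costructuredArrowMapCompProj (f : X ⟶ Y) :
    CostructuredArrow.map f ⋙ CostructuredArrow.proj K Y ≅ CostructuredArrow.proj K X :=
  Iso.refl _

theorem over_map_preserves_connected_limits_general (f : X ⟶ Y) :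
    PreservesLimitsOfShape J (CostructuredArrow.map (S := K) f) := by
  have : PreservesLimitsOfShape J (CostructuredArrow.map f ⋙ CostructuredArrow.proj K Y) :=
    preservesLimitsOfShape_of_natIso (costructuredArrowMapCompProj f).symm
  exact preservesLimitsOfShape_of_comp_costructuredArrow_proj J (CostructuredArrow.map f)

end

/-- For a morphism `f : X ⟶ Y` in a category `C`, the functor
`Over.map f : Over X ⥤ Over Y` preserves limits of every shape given by a
small connected category. -/
theorem over_map_preserves_connected_limits
    {C : Type u} [Category.{v} C] {X Y : C} (f : X ⟶ Y)
    (J : Type w) [SmallCategory J] [IsConnected J] :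
    Nonempty (PreservesLimitsOfShape J (Over.map f)) :=
  ⟨over_map_preserves_connected_limits_general (K := 𝟭 C) J f⟩
end

section
/- Let C be a category with pullbacks, and let I ⟵ D ⟶ A ⟶ J be a polynomial, i.e. morphisms n : D ⟶ I, d : D ⟶ A, a : A ⟶ J of C. Suppose Π : Over D ⥤ Over A is a functor equipped with an adjunction Over.pullback d ⊣ Π. Then the extension of the polynomial, namely the composite functor (Over.pullback n) ⋙ Π ⋙ (Over.map a) : Over I ⥤ Over J, preserves limits of every shape given by a (small) connected category. -/
open CategoryTheory CategoryTheory.Limits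

/-!
Base change `Over.pullback n` and the dependent product `Pi` are right adjoints, so they preserve
all limits. Post-composition `Over.map a` commutes with the forgetful functors to `C`, which
preserve and reflect connected limits: over a connected diagram in `Over J`, all legs of a cone in
`C` induce the same map from its apex to `J`, so the cone lifts uniquely to `Over J`.
-/

section

variable {C : Type*} [Category* C] {K : Type*} [Category* K] [IsConnected K]

theorem preservesLimitsOfShape_overMap_of_isConnected {A J : C} (a : A ⟶ J) :
    PreservesLimitsOfShape K (Over.map a) :=
  have : PreservesLimitsOfShape K (Over.map a ⋙ Over.forget J) :=
    preservesLimitsOfShape_of_natIso (Over.mapForget a).symm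
  preservesLimitsOfShape_of_reflects_of_preserves (Over.map a) (Over.forget J)

theorem polynomial_extension_preserves_connected_limits_general
    {I D A J : C} (n : D ⟶ I) (d : D ⟶ A) (a : A ⟶ J)
    [HasPullbacksAlong n] [HasPullbacksAlong d]
    (Pi : Over D ⥤ Over A) (adj : Over.pullback d ⊣ Pi) :
    PreservesLimitsOfShape K (Over.pullback n ⋙ Pi ⋙ Over.map a) := by
  have pullback_preserves : PreservesLimitsOfShape K (Over.pullback n) := inferInstance
  have pi_preserves : PreservesLimitsOfShape K Pi :=
    adj.rightAdjoint_preservesLimits.preservesLimitsOfShape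
  have map_preserves : PreservesLimitsOfShape K (Over.map a) :=
    preservesLimitsOfShape_overMap_of_isConnected a
  infer_instance

end

/-- The extension `Σ_a ∘ Π_d ∘ Δ_n : Over I ⥤ Over J` of a polynomial
`I ⟵ D ⟶ A ⟶ J` in a category with pullbacks (where `Π` is a right adjoint of
the base-change functor `Δ_d = Over.pullback d`) preserves limits of every
shape given by a small connected category. -/
theorem polynomial_extension_preserves_connected_limits
    {C : Type u} [Category.{v} C] [HasPullbacks C]
    {I D A J : C} (n : D ⟶ I) (d : D ⟶ A) (a : A ⟶ J)
    (Pi : Over D ⥤ Over A) (adj : Over.pullback d ⊣ Pi)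
    (K : Type w) [SmallCategory K] [IsConnected K] :
    Nonempty (PreservesLimitsOfShape K
      (Over.pullback n ⋙ Pi ⋙ Over.map a)) :=
  ⟨polynomial_extension_preserves_connected_limits_general n d a Pi adj⟩
end

section
/- Let I and J be types and let P : Over I ⥤ Over J be a functor between the slice categories of the category of types that preserves limits of every shape given by a (small) connected category. Then P is polynomial: there exist types D and A, functions n : D → I, d : D → A, a : A → J, a functor Π : Over D ⥤ Over A together with an adjunction Over.pullback d ⊣ Π, and a natural isomorphism P ≅ (Over.pullback n) ⋙ Π ⋙ (Over.map a). -/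
open CategoryTheory CategoryTheory.Limits

/-!
Put `A = P ⊤` and `a : A → J` its structure map. Then `P = Σ_a ∘ L` for the functor `L` that sends
`X` to `P (X → ⊤)`. A product over a slice is a wide pullback, so `L` preserves products as soon as
`P` preserves wide pullbacks; then `L` preserves all small limits, and the special adjoint functor
theorem provides a left adjoint `F` of `L`.

An object of `Over A` is the same thing as the family of its fibres, which are its sets of maps
from the points `1 → A`. Hence a right adjoint into `Over A` is determined by the values of its left
adjoint on points. The values of `F` on points form a family of objects of `Over I`, and with `D`
the disjoint union of their domains, `Σ_n ∘ Δ_d` takes the same values on points. So `L`, the right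
adjoint of `F`, agrees with the right adjoint `Π_d ∘ Δ_n` of `Σ_n ∘ Δ_d`, where `Π_d` takes
products over the fibres of `d`.
-/

namespace PolynomialFunctor

universe u v w

section Fibers

variable {A : Type u}

/-- The point `a` of `A`, regarded as an object of the slice over `A`. -/
abbrev overPoint (a : A) : Over A :=
  Over.mk (Y := PUnit.{u + 1}) (↾ fun _ => a)

/-- Maps out of a point over `a` are elements of the fibre over `a`. -/
def overPointHomEquiv (a : A) (X : Over A) : (overPoint a ⟶ X) ≃ {x : X.left // X.hom x = a} where
  toFun f := ⟨f.left PUnit.unit, ConcreteCategory.congr_hom (Over.w f) PUnit.unit⟩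
  invFun x := Over.homMk (↾ fun _ => x.1) (by ext; exact x.2)
  left_inv _ := rfl
  right_inv _ := rfl

/-- The map out of a point of `A` that picks out the element `x` of the fibre over that point. -/
def pointTo {X : Over A} (x : X.left) : overPoint (X.hom x) ⟶ X :=
  (overPointHomEquiv _ X).symm ⟨x, rfl⟩

variable (A) in
/-- The functor sending an object over `A` to the family of its fibres. The fibre over `a` is
encoded as the set of maps from `overPoint a`, so that adjunctions act on fibres directly. -/
def fiberFunctor : Over A ⥤ (A → Type u) :=
  Functor.pi' fun a => coyoneda.obj (.op (overPoint a))

instance faithful_fiberFunctor : (fiberFunctor A).Faithful where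
  map_injective {X Y} f g h := by
    ext x
    have h_fiber := ConcreteCategory.congr_hom (congrFun h (X.hom x)) (pointTo x)
    exact congrArg (fun k => k.left PUnit.unit) h_fiber

instance full_fiberFunctor : (fiberFunctor A).Full where
  map_surjective {X Y} φ := by
    refine ⟨Over.homMk (↾ fun x => (overPointHomEquiv _ Y (φ _ (pointTo x))).1) ?_, ?_⟩
    · ext x
      exact (overPointHomEquiv _ Y (φ _ (pointTo x))).2
    · ext a p
      obtain ⟨⟨x, rfl⟩, rfl⟩ := (overPointHomEquiv a X).symm.surjective p
      rfl

instance essSurj_fiberFunctor : (fiberFunctor A).EssSurj where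
  mem_essImage G :=
    ⟨Over.mk (Y := Σ a, G a) (↾ Sigma.fst), ⟨Pi.isoMk fun a => Equiv.toIso <|
      (overPointHomEquiv a _).trans (Equiv.sigmaSubtype a)⟩⟩

instance isEquivalence_fiberFunctor : (fiberFunctor A).IsEquivalence where

/-- Right adjoints into `Over A` are isomorphic if their left adjoints agree on points. No
naturality of `e` is asked for, since distinct points are not related by maps. -/
noncomputable def rightAdjointIsoOfOverPointIso {C : Type w} [Category.{u} C]
    {F F' : Over A ⥤ C} {R R' : C ⥤ Over A} (adj : F ⊣ R) (adj' : F' ⊣ R')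
    (e : ∀ a, F.obj (overPoint a) ≅ F'.obj (overPoint a)) : R ≅ R' :=
  Functor.fullyFaithfulCancelRight (fiberFunctor A) <| NatIso.pi' fun a =>
    (adj.corepresentableBy _).toIso.symm ≪≫ coyoneda.mapIso (e a).symm.op ≪≫
      (adj'.corepresentableBy _).toIso

end Fibers

section DependentProduct

variable {D : Type u}

section Families

variable {C : Type w} [Category.{v} C] [HasProducts.{u} C] {A : Type*}

/-- Reindexing families along `d` is left adjoint to taking products over the fibres of `d`. -/
noncomputable def piComapHomEquiv (d : D → A) (X : A → C) (Y : D → C) :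
    ((Pi.comap (fun _ => C) d).obj X ⟶ Y) ≃
      (X ⟶ fun a => ∏ᶜ fun e : {e // d e = a} => Y e) where
  toFun f a := Pi.lift fun e => eqToHom (congrArg X e.2.symm) ≫ f e
  invFun g e := g (d e) ≫ Pi.π (fun e' : {e' // d e' = d e} => Y e') ⟨e, rfl⟩
  left_inv f := by ext e; simp
  right_inv g := by
    ext a ⟨e, rfl⟩
    simp

instance isLeftAdjoint_piComap (d : D → A) : (Pi.comap (fun _ => C) d).IsLeftAdjoint :=
  (Adjunction.adjunctionOfEquivRight (piComapHomEquiv d) (by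
    intro X' X Y f g
    ext a ⟨e, rfl⟩
    simp [piComapHomEquiv])).isLeftAdjoint

end Families

variable {A : Type u}

/-- On fibres, base change along `d` is reindexing along `d`. -/
noncomputable def pullbackCompFiberFunctorIso (d : D ⟶ A) :
    Over.pullback d ⋙ fiberFunctor D ≅ fiberFunctor A ⋙ Pi.comap (fun _ => Type u) d :=
  NatIso.pi' fun e => ((Over.mapPullbackAdj d).corepresentableBy (overPoint e)).toIso.symm

instance isLeftAdjoint_overPullback (d : D ⟶ A) : (Over.pullback d).IsLeftAdjoint :=
  (Functor.isLeftAdjoint_comp_iff_left _ (fiberFunctor D)).1 <|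
    Functor.isLeftAdjoint_of_iso (pullbackCompFiberFunctorIso d).symm

end DependentProduct

section RightAdjoints

variable {A I : Type u}

/-- The projection to `A` of the disjoint union of an `A`-indexed family in `Over I`. -/
abbrev totalFst (E : A → Over I) : (Σ a, (E a).left) ⟶ A :=
  ↾ Sigma.fst

/-- The map to `I` from the disjoint union of an `A`-indexed family in `Over I`. -/
abbrev totalHom (E : A → Over I) : (Σ a, (E a).left) ⟶ I :=
  ↾ fun p => (E p.1).hom p.2

theorem isPullback_sigmaMk (B : A → Type u) (a : A) :
    IsPullback (↾ fun _ : B a => PUnit.unit) (↾ Sigma.mk a) (↾ fun _ : PUnit.{u + 1} => a)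
      (↾ (Sigma.fst : (Σ a, B a) → A)) := by
  rw [Types.isPullback_iff]
  refine ⟨rfl, ?_, ?_⟩
  · rintro x y ⟨-, h⟩
    exact sigma_mk_injective h
  · rintro ⟨⟩ ⟨b, x⟩ rfl
    exact ⟨x, rfl, rfl⟩

/-- Every `A`-indexed family in `Over I` arises by applying a functor `Σ_n ∘ Δ_d` to the points
of `A`. -/
noncomputable def mapPullbackOverPointIso (E : A → Over I) (a : A) :
    E a ≅ (Over.map (totalHom E)).obj ((Over.pullback (totalFst E)).obj (overPoint a)) :=
  Over.isoMk (isPullback_sigmaMk (fun a => (E a).left) a).isoPullback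
    ((isPullback_sigmaMk (fun a => (E a).left) a).isoPullback_hom_snd_assoc (totalHom E))

theorem exists_iso_pullback_comp_rightAdjoint (L : Over I ⥤ Over A) [L.IsRightAdjoint] :
    ∃ (D : Type u) (n : D ⟶ I) (d : D ⟶ A),
      Nonempty (L ≅ Over.pullback n ⋙ (Over.pullback d).rightAdjoint) :=
  let E (a : A) : Over I := L.leftAdjoint.obj (overPoint a)
  ⟨_, totalHom E, totalFst E, ⟨rightAdjointIsoOfOverPointIso (.ofIsRightAdjoint L)
    ((Adjunction.ofIsLeftAdjoint _).comp (Over.mapPullbackAdj _)) (mapPullbackOverPointIso E)⟩⟩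

end RightAdjoints

section AdjointFunctorTheorem

variable (A : Type u)

theorem isSeparating_overPoint : (ObjectProperty.ofObj (overPoint (A := A))).IsSeparating := by
  intro X Y f g h
  apply (fiberFunctor A).map_injective
  ext a p
  exact h _ (ObjectProperty.ofObj_apply _ _) p

instance wellPowered_over : WellPowered.{u} (Over A) :=
  wellPowered_of_isDetecting (isSeparating_overPoint A).isDetecting

theorem isCoseparator_overProp :
    IsCoseparator (Over.mk (Y := ULift.{u} Prop × A) (↾ Prod.snd)) := by
  rw [isCoseparator_def]
  intro X Y f g h
  ext x
  let χ : Y ⟶ Over.mk (Y := ULift.{u} Prop × A) (↾ Prod.snd) :=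
    Over.homMk (↾ fun y => (⟨y = f.left x⟩, Y.hom y)) rfl
  have h_eq : (f.left x = f.left x) = (g.left x = f.left x) :=
    congrArg (fun k => (k.left x).1.down) (h χ)
  exact (h_eq.mp rfl).symm

variable {A} in
theorem isRightAdjoint_of_preservesLimits {C : Type w} [Category.{u} C] (L : Over A ⥤ C)
    [PreservesLimits L] : L.IsRightAdjoint :=
  isRightAdjoint_of_preservesLimits_of_isCoseparating (isCoseparator_overProp A) L

end AdjointFunctorTheorem

section SliceOverTerminal

variable {C : Type w} [Category.{v} C] {B : Type*} [Category* B] {J : B} {T : C}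

/-- The lift of a functor `P` into `Over J` to the slice over its value at a terminal object `T`,
sending `X` to the image under `P` of the map `X ⟶ T`. -/
noncomputable def sliceOverTerminal (hT : IsTerminal T) (P : C ⥤ Over J) :
    C ⥤ Over (P.obj T).left :=
  (Over.equivalenceOfIsTerminal hT).inverse ⋙ Over.post P ⋙ (P.obj T).iteratedSliceForward

/-- A functor into `Over J` factors as its `sliceOverTerminal` followed by post-composition. -/
noncomputable def sliceOverTerminalCompMapIso (hT : IsTerminal T) (P : C ⥤ Over J) :
    P ≅ sliceOverTerminal hT P ⋙ Over.map (P.obj T).hom :=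
  NatIso.ofComponents
    (fun X => Over.isoMk (Iso.refl _)
      ((Category.id_comp _).trans (Over.w (P.map (hT.from X)))))
    (fun f => by ext1; exact (Category.comp_id _).trans (Category.id_comp _).symm)

instance preservesLimitsOfShape_sliceOverTerminal (hT : IsTerminal T) (P : C ⥤ Over J)
    (K : Type*) [Category* K] [PreservesLimitsOfShape (WithTerminal K) P] :
    PreservesLimitsOfShape K (sliceOverTerminal hT P) :=
  have : (P.obj T).iteratedSliceForward.IsEquivalence :=
    (P.obj T).iteratedSliceEquiv.isEquivalence_functor
  comp_preservesLimitsOfShape _ _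

theorem preservesLimitsOfShape_sliceOverTerminal_of_isConnected (hT : IsTerminal T)
    (P : C ⥤ Over J) (K : Type*) [Category* K] [IsConnected K] [PreservesLimitsOfShape K P] :
    PreservesLimitsOfShape K (sliceOverTerminal hT P) :=
  have : PreservesLimitsOfShape K (sliceOverTerminal hT P ⋙ Over.forget _) :=
    inferInstanceAs (PreservesLimitsOfShape K (P ⋙ Over.forget J))
  preservesLimitsOfShape_of_reflects_of_preserves _ (Over.forget _)

theorem preservesLimitsOfSize_sliceOverTerminal [HasLimits C] (hT : IsTerminal T)
    (P : C ⥤ Over J) [∀ K : Type v, PreservesLimitsOfShape (WidePullbackShape K) P] :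
    PreservesLimitsOfSize.{v, v} (sliceOverTerminal hT P) := by
  have : PreservesLimitsOfShape WalkingCospan P :=
    preservesLimitsOfShape_of_equiv (WidePullbackShape.equivalenceOfEquiv _ Equiv.ulift.{v}) P
  have := preservesLimitsOfShape_sliceOverTerminal_of_isConnected hT P WalkingCospan
  have : PreservesLimitsOfShape (Discrete WalkingPair) (sliceOverTerminal hT P) :=
    preservesLimitsOfShape_of_equiv (Discrete.equivalence Equiv.ulift.{v}) _
  have := preservesEqualizers_of_preservesPullbacks_and_binaryProducts (sliceOverTerminal hT P)
  exact preservesLimits_of_preservesEqualizers_and_products _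

end SliceOverTerminal

end PolynomialFunctor

open PolynomialFunctor in
theorem polynomial_of_preserves_connected_limits_general
    {I J : Type u} (P : Over I ⥤ Over J)
    (hP : ∀ K : Type u, PreservesLimitsOfShape (WidePullbackShape K) P) :
    ∃ (D A : Type u) (n : D ⟶ I) (d : D ⟶ A) (a : A ⟶ J),
      Nonempty (Σ (Pi : Over D ⥤ Over A),
        (Over.pullback d ⊣ Pi) ×
        (P ≅ Over.pullback n ⋙ Pi ⋙ Over.map a)) := by
  let L := sliceOverTerminal Over.mkIdTerminal P
  have : PreservesLimits L := preservesLimitsOfSize_sliceOverTerminal _ P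
  have : L.IsRightAdjoint := isRightAdjoint_of_preservesLimits L
  obtain ⟨D, n, d, ⟨e⟩⟩ := exists_iso_pullback_comp_rightAdjoint L
  exact ⟨D, _, n, d, (P.obj (Over.mk (𝟙 I))).hom, ⟨_, .ofIsLeftAdjoint (Over.pullback d),
    sliceOverTerminalCompMapIso _ P ≪≫ Functor.isoWhiskerRight e _⟩⟩

/-- A functor between slice categories of `Type u` that preserves limits of
every small connected shape is polynomial: it is naturally isomorphic to a
composite `Σ_a ∘ Π_d ∘ Δ_n` for some maps `n : D → I`, `d : D → A`,
`a : A → J`, where `Π` is a right adjoint of `Δ_d = Over.pullback d`. -/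
theorem polynomial_of_preserves_connected_limits
    {I J : Type u} (P : Over I ⥤ Over J)
    (hP : ∀ (K : Type u) [SmallCategory K] [IsConnected K],
      PreservesLimitsOfShape K P) :
    ∃ (D A : Type u) (n : D ⟶ I) (d : D ⟶ A) (a : A ⟶ J),
      Nonempty (Σ (Pi : Over D ⥤ Over A),
        (Over.pullback d ⊣ Pi) ×
        (P ≅ Over.pullback n ⋙ Pi ⋙ Over.map a)) := by
  exact polynomial_of_preserves_connected_limits_general P fun K => hP (WidePullbackShape K)
end

section
/- Let P₁, P₂, P₃ be three games in Set, with state types I₁, I₂, I₃, move families A₁, A₂, A₃, counter-move families D₁, D₂, D₃ and next-state functions n₁, n₂, n₃. Let R : I₁ → I₂ → I₃ → Type be a family (a span from I₁ to I₂ × I₃), and fix states i₁ : I₁, i₂ : I₂, i₃ : I₃. Then there is an equivalence of types between (∀ (a₁ : A₁ i₁) (a₂ : A₂ i₂), Σ (a₃ : A₃ i₃), ∀ (d₃ : D₃ i₃ a₃), Σ (d₁ : D₁ i₁ a₁) (d₂ : D₂ i₂ a₂), R (n₁ i₁ a₁ d₁) (n₂ i₂ a₂ d₂) (n₃ i₃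 a₃ d₃)) and (∀ (a₁ : A₁ i₁), Σ (f : A₂ i₂ → A₃ i₃) (φ : ∀ a₂, D₃ i₃ (f a₂) → D₂ i₂ a₂), ∀ (a₂ : A₂ i₂) (d₃ : D₃ i₃ (f a₂)), Σ (d₁ : D₁ i₁ a₁), R (n₁ i₁ a₁ d₁) (n₂ i₂ a₂ (φ a₂ d₃)) (n₃ i₃ (f a₂) d₃)). This is the hom-set isomorphism exhibiting P₂ ⊸ P₃ as right adjoint to − ⊗ P₂: the first type expresses that R is a simulation from P₁ ⊗ P₂ to P₃ at these states, the second that R is a simulation from P₁ to P₂ ⊸ P₃. -/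
universe u

/-!
Fix a move `a₁` of Alfred in `P₁`. A response in the tensor game becomes one in `P₂ ⊸ P₃` by
Skolemization: products distribute over dependent sums (`∀ x, Σ y, …` becomes `Σ f, ∀ x, …`), so
the choices of `a₃` and `d₂` can be extracted as the functions `f` and `φ`. The counter-move `d₁`
stays behind, because the moves of `P₂ ⊸ P₃` do not record it.
-/

/-- The type-theoretic axiom of choice: a dependent product of dependent sums is a dependent sum,
over choice functions, of dependent products. -/
def piSigmaEquivSigmaPi {α : Type*} {β : α → Type*} (γ : ∀ a, β a → Type*) :
    (∀ a, Σ b, γ a b) ≃ Σ f : ∀ a, β a, ∀ a, γ a (f a) where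
  toFun h := ⟨fun a => (h a).1, fun a => (h a).2⟩
  invFun p a := ⟨p.1 a, p.2 a⟩

/-- Interchange of two independent dependent sums. -/
def sigmaComm {α β : Type*} (γ : α → β → Type*) : (Σ a b, γ a b) ≃ Σ b a, γ a b where
  toFun p := ⟨p.2.1, p.1, p.2.2⟩
  invFun p := ⟨p.2.1, p.1, p.2.2⟩

/-- Currying of simulation data at a fixed move of Alfred in `P₁`, whose counter-moves form `D₁`.
The family `R` stands for the simulation relation at the next states, and may depend on all moves
and counter-moves. -/
def tensorResponseEquivLinearHomResponse {A₂ A₃ D₁ : Type*} {D₂ : A₂ → Type*} {D₃ : A₃ → Type*}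
    (R : ∀ a₂ a₃, D₁ → D₂ a₂ → D₃ a₃ → Type*) :
    (∀ a₂, Σ a₃, ∀ d₃, Σ d₁ d₂, R a₂ a₃ d₁ d₂ d₃) ≃
      Σ (f : A₂ → A₃) (φ : ∀ a₂, D₃ (f a₂) → D₂ a₂), ∀ a₂ d₃, Σ d₁, R a₂ (f a₂) d₁ (φ a₂ d₃) d₃ :=
  calc (∀ a₂, Σ a₃, ∀ d₃, Σ d₁ d₂, R a₂ a₃ d₁ d₂ d₃)
    _ ≃ Σ f : A₂ → A₃, ∀ a₂ d₃, Σ d₁ d₂, R a₂ (f a₂) d₁ d₂ d₃ :=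
      piSigmaEquivSigmaPi _
    _ ≃ Σ f : A₂ → A₃, ∀ a₂ d₃, Σ d₂ d₁, R a₂ (f a₂) d₁ d₂ d₃ :=
      .sigmaCongrRight fun _ => .piCongrRight fun _ => .piCongrRight fun _ => sigmaComm _
    _ ≃ Σ f : A₂ → A₃, ∀ a₂, Σ φ : D₃ (f a₂) → D₂ a₂, ∀ d₃, Σ d₁, R a₂ (f a₂) d₁ (φ d₃) d₃ :=
      .sigmaCongrRight fun _ => .piCongrRight fun _ => piSigmaEquivSigmaPi _
    _ ≃ Σ (f : A₂ → A₃) (φ : ∀ a₂, D₃ (f a₂) → D₂ a₂),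
          ∀ a₂ d₃, Σ d₁, R a₂ (f a₂) d₁ (φ a₂ d₃) d₃ :=
      .sigmaCongrRight fun _ => piSigmaEquivSigmaPi _

/-- Hom-set isomorphism exhibiting `P₂ ⊸ P₃` as right adjoint to `− ⊗ P₂`:
at fixed states, simulation data for `R` from `P₁ ⊗ P₂` to `P₃` is equivalent
to simulation data for `R` from `P₁` to `P₂ ⊸ P₃`. -/
theorem tensor_linear_adjunction
    {I₁ I₂ I₃ : Type u}
    (A₁ : I₁ → Type u) (A₂ : I₂ → Type u) (A₃ : I₃ → Type u)
    (D₁ : ∀ i, A₁ i → Type u) (D₂ : ∀ i, A₂ i → Type u) (D₃ : ∀ i, A₃ i → Type u)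
    (n₁ : ∀ i a, D₁ i a → I₁) (n₂ : ∀ i a, D₂ i a → I₂) (n₃ : ∀ i a, D₃ i a → I₃)
    (R : I₁ → I₂ → I₃ → Type u) (i₁ : I₁) (i₂ : I₂) (i₃ : I₃) :
    Nonempty (
      (∀ (a₁ : A₁ i₁) (a₂ : A₂ i₂), Σ (a₃ : A₃ i₃), ∀ (d₃ : D₃ i₃ a₃),
        Σ (d₁ : D₁ i₁ a₁) (d₂ : D₂ i₂ a₂),
          R (n₁ i₁ a₁ d₁) (n₂ i₂ a₂ d₂) (n₃ i₃ a₃ d₃))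
      ≃
      (∀ (a₁ : A₁ i₁), Σ (f : A₂ i₂ → A₃ i₃)
          (φ : ∀ a₂, D₃ i₃ (f a₂) → D₂ i₂ a₂),
        ∀ (a₂ : A₂ i₂) (d₃ : D₃ i₃ (f a₂)),
          Σ (d₁ : D₁ i₁ a₁),
            R (n₁ i₁ a₁ d₁) (n₂ i₂ a₂ (φ a₂ d₃)) (n₃ i₃ (f a₂) d₃))) :=
  ⟨.piCongrRight fun a₁ => tensorResponseEquivLinearHomResponse fun a₂ a₃ d₁ d₂ d₃ =>
    R (n₁ i₁ a₁ d₁) (n₂ i₂ a₂ d₂) (n₃ i₃ a₃ d₃)⟩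
end

section
/- Let k be a natural number, U and V types, and f : V → U a function. Suppose h : (Fin k → U) → (Fin k → U) sends every tuple to a permutation of itself, i.e. for every u : Fin k → U there exists σ : Equiv.Perm (Fin k) with h u = u ∘ σ. Then there exists ρ : (Fin k → V) → (Fin k → V) such that: (1) every tuple is sent to a permutation of itself, i.e. for every v there exists σ with ρ v = v ∘ σ; (2) the square commutes: for every v : Fin k → V, f ∘ (ρ v) = h (f ∘ v); and (3) the square is a pullback: for every pair (u : Fin k → U, v : Fin k → V) with h u = f ∘ v, there exists a unique w : Fin k → V such that f ∘ w = u and ρ w = v. -/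
universe u v

section ReindexAlong

variable {ι κ U V : Type*}

/-- The tuple `v` reindexed by the bijection that the family `e` assigns to its image `f ∘ v`.
This is the lift along `f` of the operation `u ↦ u ∘ e u` on tuples in `U`. The source and target
index types are kept separate; permutations are the case `κ = ι`. -/
def reindexAlong (e : (ι → U) → κ ≃ ι) (f : V → U) (v : ι → V) : κ → V :=
  v ∘ e (f ∘ v)

variable (e : (ι → U) → κ ≃ ι) (f : V → U)

theorem comp_reindexAlong (v : ι → V) : f ∘ reindexAlong e f v = (f ∘ v) ∘ e (f ∘ v) :=
  rfl

variable {e f}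

-- Only `f ∘ w` decides which bijection acts on `w`, so once it is known the action can be inverted.
theorem reindexAlong_eq_iff_eq_comp_symm {u : ι → U} {w : ι → V} (hw : f ∘ w = u) (v : κ → V) :
    reindexAlong e f w = v ↔ w = v ∘ (e u).symm := by
  subst hw
  exact ((e (f ∘ w)).eq_comp_symm w v).symm

theorem existsUnique_comp_eq_and_reindexAlong_eq {u : ι → U} {v : κ → V} (huv : u ∘ e u = f ∘ v) :
    ∃! w : ι → V, f ∘ w = u ∧ reindexAlong e f w = v := by
  have hlift : f ∘ (v ∘ (e u).symm) = u := (((e u).eq_comp_symm u (f ∘ v)).2 huv).symm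
  refine ⟨v ∘ (e u).symm, ⟨hlift, ?_⟩, ?_⟩
  · exact (reindexAlong_eq_iff_eq_comp_symm hlift v).2 rfl
  · rintro w ⟨hw, hwv⟩
    exact (reindexAlong_eq_iff_eq_comp_symm hw v).1 hwv

end ReindexAlong

theorem lift_permutation_action_pullback_general {ι U V : Type*} (f : V → U)
    (h : (ι → U) → (ι → U)) (hperm : ∀ u : ι → U, ∃ σ : Equiv.Perm ι, h u = u ∘ σ) :
    ∃ ρ : (ι → V) → (ι → V),
      (∀ v : ι → V, ∃ σ : Equiv.Perm ι, ρ v = v ∘ σ) ∧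
      (∀ v : ι → V, f ∘ ρ v = h (f ∘ v)) ∧
      (∀ (u : ι → U) (v : ι → V), h u = f ∘ v → ∃! w : ι → V, f ∘ w = u ∧ ρ w = v) := by
  choose σ hσ using hperm
  refine ⟨reindexAlong σ f, fun v => ⟨σ (f ∘ v), rfl⟩, fun v => ?_, fun u v huv => ?_⟩
  · rw [comp_reindexAlong, hσ]
  · exact existsUnique_comp_eq_and_reindexAlong_eq ((hσ u).symm.trans huv)

/-- If `h : U^k → U^k` sends every tuple to a permutation of itself, then for
any `f : V → U` there is `ρ : V^k → V^k` sending every tuple to a permutation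
of itself, making the square with `f^k` (post-composition with `f`) and `h`
commute, and making that square a pullback. -/
theorem lift_permutation_action_pullback
    (k : ℕ) (U : Type u) (V : Type v) (f : V → U)
    (h : (Fin k → U) → (Fin k → U))
    (hperm : ∀ u : Fin k → U, ∃ σ : Equiv.Perm (Fin k), h u = u ∘ σ) :
    ∃ ρ : (Fin k → V) → (Fin k → V),
      (∀ v : Fin k → V, ∃ σ : Equiv.Perm (Fin k), ρ v = v ∘ σ) ∧
      (∀ v : Fin k → V, f ∘ ρ v = h (f ∘ v)) ∧
      (∀ (u : Fin k → U) (v : Fin k → V), h u = f ∘ v →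
        ∃! w : Fin k → V, f ∘ w = u ∧ ρ w = v) :=
  lift_permutation_action_pullback_general f h hperm
end

section
/- Let k be a natural number and I, J, R types, with functions f : R → (Fin k → I) and j : R → J. Let s : (Fin k → I) → (Fin k → I) be a choice of representatives up to permutation, i.e. a function such that Multiset.ofFn (s i) = Multiset.ofFn i for every i, and s i = s i' whenever Multiset.ofFn i = Multiset.ofFn i'. Assume the span (f, j) coequalizes all symmetries: for every permutation σ : Equiv.Perm (Fin k) there exists a bijection H : R ≃ R such that f (H r) = (f r) ∘ σ and j (H r) = j r for all r : R. Then there is a bijection ε from R to the set R' = {(i, r) : (Fin k → I) × R | s i = f r} such that for every r : R, the first component of ε r equals f r and j applied to the second component of ε r equals j r. -/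
universe u v

/-!
The apex of a span over `X` is the disjoint union of its fibres, and the fibre of the pullback
along `s` over `x` is the original fibre over `s x`. When `s x` lies in the orbit of `x`, the
bijection witnessing the symmetry that carries `x` to `s x` restricts to a bijection between the
fibres over `x` and over `s x`; gluing these over all `x` gives `ε`. Two tuples lie in the same
orbit of the permutation action exactly when they have the same multiset of entries.
-/

open MulAction

section Multiset

variable {ι κ α : Type*} [Fintype ι] [Fintype κ]

theorem map_univ_val_eq_iff_exists_equiv {x : ι → α} {y : κ → α} :
    Finset.univ.val.map x = Finset.univ.val.map y ↔ ∃ e : ι ≃ κ, y ∘ e = x := by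
  classical
  constructor
  · intro h
    have card_fiber_eq (a : α) : Fintype.card {i // x i = a} = Fintype.card {i // y i = a} := by
      have count_eq := congrArg (Multiset.count a) h
      simpa only [Multiset.count_map, ← Finset.filter_val, Finset.card_val, eq_comm (a := a),
        ← Fintype.card_subtype] using count_eq
    exact ⟨Equiv.ofFiberEquiv fun a => Fintype.equivOfCardEq (card_fiber_eq a),
      funext (Equiv.ofFiberEquiv_map _)⟩
  · rintro ⟨e, rfl⟩
    rw [← Multiset.map_map, Multiset.map_univ_val_equiv]

theorem mem_orbit_perm_iff_map_univ_val_eq {x y : ι → α} :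
    x ∈ orbit (Equiv.Perm ι)ᵈᵐᵃ y ↔ Finset.univ.val.map x = Finset.univ.val.map y :=
  (DomMulAct.mk.exists_congr_left).symm.trans map_univ_val_eq_iff_exists_equiv.symm

theorem mem_orbit_perm_iff_coe_ofFn_eq {k : ℕ} {x y : Fin k → α} :
    x ∈ orbit (Equiv.Perm (Fin k))ᵈᵐᵃ y ↔
      (List.ofFn x : Multiset α) = (List.ofFn y : Multiset α) := by
  rw [mem_orbit_perm_iff_map_univ_val_eq, Fin.univ_val_map, Fin.univ_val_map]

end Multiset

section Span

variable {X Y R S J : Type*}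

/-- A map `f : R → X` whose fibre over each `x` is identified with the fibre of `g : S → Y` over
`s x` is a pullback of `g` along `s`. The fibres of `g` are written `s x = g t`, the orientation
used by `Function.Pullback`. -/
def pullbackEquivOfFiberEquiv {f : R → X} {g : S → Y} {s : X → Y}
    (e : ∀ x, {r // f r = x} ≃ {t // s x = g t}) : R ≃ s.Pullback g :=
  calc
    R ≃ Σ x, {r // f r = x} := (Equiv.sigmaFiberEquiv f).symm
    _ ≃ Σ x, {t // s x = g t} := Equiv.sigmaCongrRight e
    _ ≃ s.Pullback g := (Equiv.subtypeProdEquivSigmaSubtype fun x t => s x = g t).symm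

theorem fst_pullbackEquivOfFiberEquiv {f : R → X} {g : S → Y} {s : X → Y}
    (e : ∀ x, {r // f r = x} ≃ {t // s x = g t}) (r : R) :
    (pullbackEquivOfFiberEquiv e r).fst = f r :=
  rfl

theorem snd_pullbackEquivOfFiberEquiv {f : R → X} {g : S → Y} {s : X → Y}
    (e : ∀ x, {r // f r = x} ≃ {t // s x = g t}) (r : R) :
    (pullbackEquivOfFiberEquiv e r).snd = e (f r) ⟨r, rfl⟩ :=
  rfl

variable {G : Type*} [Group G] [MulAction G X] {f : R → X} {j : R → J}

theorem exists_fiber_equiv_of_mem_orbit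
    (hcoeq : ∀ g : G, ∃ H : R ≃ R, ∀ r, f (H r) = g • f r ∧ j (H r) = j r)
    {x y : X} (hy : y ∈ orbit G x) :
    ∃ e : {r // f r = x} ≃ {r // y = f r}, ∀ r, j (e r) = j r := by
  obtain ⟨g, rfl⟩ := hy
  obtain ⟨H, hH⟩ := hcoeq g
  have mem_fiber_iff (r : R) : f r = x ↔ g • x = f (H r) := by
    rw [(hH r).1, smul_left_cancel_iff, eq_comm]
  exact ⟨H.subtypeEquiv mem_fiber_iff, fun r => (hH r).2⟩

theorem span_coequalizes_symmetries_bijection_general {s : X → X} (hs : ∀ x, s x ∈ orbit G x)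
    (hcoeq : ∀ g : G, ∃ H : R ≃ R, ∀ r, f (H r) = g • f r ∧ j (H r) = j r) :
    ∃ ε : R ≃ {p : X × R // s p.1 = f p.2},
      ∀ r, (ε r : X × R).1 = f r ∧ j (ε r : X × R).2 = j r := by
  choose e he using fun x => exists_fiber_equiv_of_mem_orbit hcoeq (hs x)
  refine ⟨pullbackEquivOfFiberEquiv e, fun r => ⟨fst_pullbackEquivOfFiberEquiv e r, ?_⟩⟩
  exact (congrArg j (snd_pullbackEquivOfFiberEquiv e r)).trans (he (f r) ⟨r, rfl⟩)

end Span

/-- If a span `(f, j)` from `I^k` to `J` coequalizes all the symmetries on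
`I^k`, then `R` is in bijection with `R' = {(i, r) | s i = f r}` (where `s`
chooses representatives of tuples up to permutation), compatibly with both
legs of the span. -/
theorem span_coequalizes_symmetries_bijection
    (k : ℕ) (I : Type u) (J : Type v) (R : Type u)
    (f : R → (Fin k → I)) (j : R → J)
    (s : (Fin k → I) → (Fin k → I))
    (hs₁ : ∀ i : Fin k → I, (List.ofFn (s i) : Multiset I) = (List.ofFn i : Multiset I))
    (hs₂ : ∀ i i' : Fin k → I,
      (List.ofFn i : Multiset I) = (List.ofFn i' : Multiset I) → s i = s i')
    (hcoeq : ∀ σ : Equiv.Perm (Fin k), ∃ H : R ≃ R,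
      ∀ r : R, f (H r) = f r ∘ σ ∧ j (H r) = j r) :
    ∃ ε : R ≃ {p : (Fin k → I) × R // s p.1 = f p.2},
      ∀ r : R, ((ε r : (Fin k → I) × R).1 = f r) ∧
        j ((ε r : (Fin k → I) × R).2) = j r :=
  span_coequalizes_symmetries_bijection_general
    (fun i => mem_orbit_perm_iff_coe_ofFn_eq.2 (hs₁ i)) fun g => hcoeq (DomMulAct.mk.symm g)
end
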